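/- Let ℓ be a prime and (K,v) a valued field with char K ≠ ℓ and K containing a primitive ℓ-th root of unity. Fix a separable closure K_sep of K, let K' ⊆ K_sep be the field obtained from K by adjoining all ℓ-th roots of all elements of K^×, and let O' be a valuation subring of K' with O' ∩ K = O_v, with maximal ideal m'. Let D = {σ ∈ Gal(K'/K) : σ(O') = O'} be the decomposition group and I = {σ ∈ D : σ(x) − x ∈ m' for all x ∈ O'} the inertia group of O' over v. Let D_v^1 ≤ Gal(K'/K) be the subgroup of automorphisms fixing pointwise every α ∈ K' with α^ℓ ∈ 1+m_v, and I_v^1 the subgroup fixing pointwise every α ∈ K' with α^ℓ ∈ O_v^×. Then D_v^1 ⊆ D and I_v^1 ⊆ I; if moreover the residue field k(v) has characteristic different from ℓ, then D_v^1 = D and I_v^1 = I. -/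

import Mathlib

/-- The field `K' = K(√[ℓ]{K^×})` inside a separable closure `Ω` of `K`, generated over
`K` by all `α` with `α^ℓ ∈ K^×`. -/
noncomputable def Kprime (K : Type*) [Field K] (Ω : Type*) [Field Ω] [Algebra K Ω]
    (ℓ : ℕ) : IntermediateField K Ω :=
  IntermediateField.adjoin K {α : Ω | ∃ x : K, x ≠ 0 ∧ α ^ ℓ = algebraMap K Ω x}

section

variable (K : Type*) [Field K] (Ω : Type*) [Field Ω] [Algebra K Ω] (ℓ : ℕ)

/-- The decomposition group of `O'` over `v`: automorphisms of `K'|K` with `σ(O') = O'`. -/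
def Dgp (O' : ValuationSubring ↥(Kprime K Ω ℓ)) :
    Set (↥(Kprime K Ω ℓ) ≃ₐ[K] ↥(Kprime K Ω ℓ)) :=
  {σ | ∀ x : ↥(Kprime K Ω ℓ), x ∈ O' ↔ σ x ∈ O'}

/-- The inertia group of `O'` over `v`: elements `σ` of the decomposition group with
`σ(x) - x ∈ m'` for all `x ∈ O'`. -/
def Igp (O' : ValuationSubring ↥(Kprime K Ω ℓ)) :
    Set (↥(Kprime K Ω ℓ) ≃ₐ[K] ↥(Kprime K Ω ℓ)) :=
  {σ | σ ∈ Dgp K Ω ℓ O' ∧ ∀ x : ↥(Kprime K Ω ℓ), x ∈ O' → O'.valuation (σ x - x) < 1}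

/-- `D_v^1`: automorphisms of `K'|K` fixing each `α` with `α^ℓ ∈ 1 + m_v`. -/
def D1gp (O : ValuationSubring K) :
    Set (↥(Kprime K Ω ℓ) ≃ₐ[K] ↥(Kprime K Ω ℓ)) :=
  {σ | ∀ α : ↥(Kprime K Ω ℓ),
    (∃ a : K, O.valuation a < 1 ∧ α ^ ℓ = algebraMap K ↥(Kprime K Ω ℓ) (1 + a)) → σ α = α}

/-- `I_v^1`: automorphisms of `K'|K` fixing each `α` with `α^ℓ ∈ O_v^×`. -/
def I1gp (O : ValuationSubring K) :
    Set (↥(Kprime K Ω ℓ) ≃ₐ[K] ↥(Kprime K Ω ℓ)) :=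
  {σ | ∀ α : ↥(Kprime K Ω ℓ),
    (∃ u : Kˣ, u ∈ O.unitGroup ∧ α ^ ℓ = algebraMap K ↥(Kprime K Ω ℓ) (u : K)) → σ α = α}

end

namespace Stmt12Aux

/-- In a field, geometric sums of suitable length do not vanish. -/
lemma geom_ne_zero {k : Type*} [Field k] (z : k) :
    ∃ N : ℕ, 0 < N ∧ ∀ M : ℕ, 0 < M → N ∣ M → ∑ j ∈ Finset.range (M + 1), z ^ j ≠ 0 := by
  by_cases hz : z = 1
  · subst hz
    by_cases hc : ringChar k = 0
    · refine ⟨1, one_pos, fun M hM _ => ?_⟩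
      simp only [one_pow, Finset.sum_const, Finset.card_range, nsmul_eq_mul, mul_one]
      intro h
      have := (ringChar.spec k (M + 1)).1 h
      rw [hc] at this
      simp at this
    · refine ⟨ringChar k, Nat.pos_of_ne_zero hc, fun M hM hd => ?_⟩
      simp only [one_pow, Finset.sum_const, Finset.card_range, nsmul_eq_mul, mul_one]
      have : (M : k) = 0 := (ringChar.spec k M).2 hd
      push_cast
      rw [this]
      simp
  · have key : ∀ M : ℕ, ∑ j ∈ Finset.range (M + 1), z ^ j = 0 → z ^ (M + 1) = 1 := by
      intro M h
      have := geom_sum_mul z (M + 1)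
      rw [h, zero_mul] at this
      exact (sub_eq_zero.1 this.symm)
    by_cases ho : IsOfFinOrder z
    · refine ⟨orderOf z, ho.orderOf_pos, fun M hM hd h => hz ?_⟩
      have h1 := key M h
      rw [pow_succ, orderOf_dvd_iff_pow_eq_one.1 hd, one_mul] at h1
      exact h1
    · refine ⟨1, one_pos, fun M hM hd h => ho ?_⟩
      exact isOfFinOrder_iff_pow_eq_one.2 ⟨M + 1, Nat.succ_pos _, key M h⟩

lemma val_geom {F : Type*} [Field F] (A : ValuationSubring F) (x : F) :
    ∃ N : ℕ, 0 < N ∧ ∀ M : ℕ, 0 < M → N ∣ M →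
      (A.valuation x ≤ 1 → A.valuation (∑ j ∈ Finset.range (M + 1), x ^ j) = 1) := by
  by_cases hx : A.valuation x ≤ 1
  · have hxA := (A.valuation_le_one_iff x).1 hx
    obtain ⟨N, hN, h⟩ := geom_ne_zero (IsLocalRing.residue A ⟨x, hxA⟩)
    refine ⟨N, hN, fun M hM hd _ => ?_⟩
    have h1 := h M hM hd
    have h2 : IsLocalRing.residue A (∑ j ∈ Finset.range (M + 1), (⟨x, hxA⟩ : A) ^ j) ≠ 0 := by
      rw [map_sum]; simp only [map_pow]; exact h1
    rw [Ne, IsLocalRing.residue_eq_zero_iff, A.valuation_lt_one_iff] at h2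
    have h3 := A.valuation_le_one (∑ j ∈ Finset.range (M + 1), (⟨x, hxA⟩ : A) ^ j)
    have h4 := le_antisymm h3 (not_lt.1 h2)
    simpa using h4
  · exact ⟨1, one_pos, fun _ _ _ h => absurd h hx⟩

lemma val_geom_gt {F : Type*} [Field F] (A : ValuationSubring F) (x : F)
    (hx : 1 < A.valuation x) (M : ℕ) :
    A.valuation (∑ j ∈ Finset.range (M + 1), x ^ j) = A.valuation x ^ M := by
  have h := congrArg A.valuation (geom_sum_mul x (M + 1))
  have h0 : A.valuation 1 < A.valuation x := by rw [map_one]; exact hx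
  have h1 : A.valuation (x - 1) = A.valuation x :=
    Valuation.map_sub_eq_of_lt_left A.valuation h0
  have h2 : A.valuation (x ^ (M + 1) - 1) = A.valuation x ^ (M + 1) := by
    rw [← map_pow]
    refine Valuation.map_sub_eq_of_lt_left _ ?_
    rw [map_one, map_pow]
    exact one_lt_pow₀ hx (Nat.succ_ne_zero _)
  rw [map_mul, h1, h2, pow_succ] at h
  exact mul_right_cancel₀ (ne_of_gt (lt_trans zero_lt_one hx)) h

section fin
variable {K F : Type*} [Field K] [Field F] [Algebra K F]

lemma exists_w [FiniteDimensional K F] (A : ValuationSubring F) (x : F) :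
    ∃ w : F, ∀ g : F ≃ₐ[K] F,
      A.valuation (g w) ≤ 1 ∧ A.valuation (g (w * x)) ≤ 1 ∧
      (A.valuation (g x) ≤ 1 → A.valuation (g w) = 1) ∧
      (1 < A.valuation (g x) → A.valuation (g w) < 1) ∧
      (A.valuation (g x) < 1 → A.valuation (g w - 1) < 1) := by
  classical
  choose N hN hN' using fun g : F ≃ₐ[K] F => val_geom A (g x)
  have hfin : Fintype (F ≃ₐ[K] F) := Fintype.ofFinite _
  let M := ∏ g : F ≃ₐ[K] F, N g
  have hM : 0 < M := Finset.prod_pos fun g _ => hN g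
  have hd : ∀ g, N g ∣ M := fun g => Finset.dvd_prod_of_mem _ (Finset.mem_univ g)
  let f := ∑ j ∈ Finset.range (M + 1), x ^ j
  have hgf : ∀ g : F ≃ₐ[K] F, g f = ∑ j ∈ Finset.range (M + 1), (g x) ^ j := by
    intro g; simp [f]
  refine ⟨f⁻¹, fun g => ?_⟩
  have hle : A.valuation (g x) ≤ 1 → A.valuation (g f⁻¹) = 1 := by
    intro h
    rw [map_inv₀, map_inv₀, hgf, hN' g M hM (hd g) h, inv_one]
  have hgt : 1 < A.valuation (g x) → A.valuation (g f⁻¹) = (A.valuation (g x) ^ M)⁻¹ := by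
    intro h
    rw [map_inv₀, map_inv₀, hgf, val_geom_gt A _ h]
  have hgt' : 1 < A.valuation (g x) → A.valuation (g f⁻¹) < 1 := by
    intro h
    rw [hgt h]
    exact inv_lt_one_of_one_lt₀ (one_lt_pow₀ h hM.ne')
  refine ⟨?_, ?_, hle, hgt', ?_⟩
  · rcases le_or_gt (A.valuation (g x)) 1 with h | h
    · exact (hle h).le
    · exact (hgt' h).le
  · rw [map_mul, map_mul]
    rcases le_or_gt (A.valuation (g x)) 1 with h | h
    · rw [hle h, one_mul]; exact h
    · rw [hgt h]
      have h0 : 0 < A.valuation (g x) := lt_trans zero_lt_one h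
      have := le_self_pow₀ h.le hM.ne'
      calc _ ≤ (A.valuation (g x) ^ M)⁻¹ * A.valuation (g x) ^ M := by gcongr
        _ = 1 := inv_mul_cancel₀ (pow_pos h0 _).ne'
  · intro h
    have h1 := hle h.le
    have hne : f ≠ 0 := by
      rintro h0; rw [h0] at h1; simp at h1
    have hgne : g f ≠ 0 := by simpa using hne
    have h3 : g f⁻¹ - 1 = g f⁻¹ * (1 - g f) := by
      rw [map_inv₀]; field_simp
    rw [h3, map_mul, h1, one_mul, Valuation.map_sub_swap, hgf, Finset.sum_range_succ']
    simp only [pow_zero, add_sub_cancel_right]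
    refine Valuation.map_sum_lt _ one_ne_zero fun i _ => ?_
    rw [map_pow]
    exact pow_lt_one₀ zero_le h (Nat.succ_ne_zero _)

/-- Decomposition group at finite level. -/
def Dg (A : ValuationSubring F) : Subgroup (F ≃ₐ[K] F) where
  carrier := {g | ∀ x, A.valuation x ≤ 1 ↔ A.valuation (g x) ≤ 1}
  mul_mem' := by
    intro a b ha hb x
    rw [AlgEquiv.mul_apply, ← ha, ← hb]
  one_mem' := by intro x; rfl
  inv_mem' := by
    intro a ha x
    rw [ha (a⁻¹ x), ← AlgEquiv.mul_apply, mul_inv_cancel, AlgEquiv.one_apply]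

lemma lt_one_iff (A : ValuationSubring F) (a : F) :
    A.valuation a < 1 ↔ a = 0 ∨ a⁻¹ ∉ A := by
  rw [← A.valuation_le_one_iff, not_le, map_inv₀]
  by_cases h : a = 0
  · simp [h]
  · simp only [h, false_or]
    rw [one_lt_inv₀]
    exact (Valuation.pos_iff _).2 h

lemma Dg_lt {A : ValuationSubring F} {g : F ≃ₐ[K] F} (hg : g ∈ Dg A) (x : F) :
    A.valuation x < 1 ↔ A.valuation (g x) < 1 := by
  rw [lt_one_iff, lt_one_iff, ← A.valuation_le_one_iff, ← A.valuation_le_one_iff, ← map_inv₀ g,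
    ← hg x⁻¹]
  simp

lemma exists_a [FiniteDimensional K F] {A : ValuationSubring F} {g : F ≃ₐ[K] F}
    (hg : g ∉ Dg A) : ∃ a, A.valuation a ≤ 1 ∧ 1 < A.valuation (g a) := by
  by_contra! hcon
  apply hg
  intro x
  refine ⟨hcon x, fun h => ?_⟩
  have hpow : ∀ n : ℕ, ∀ y, A.valuation y ≤ 1 → A.valuation ((g ^ n) y) ≤ 1 := by
    intro n
    induction n with
    | zero => intro y hy; simpa using hy
    | succ n ih => intro y hy; rw [pow_succ]; exact ih _ (hcon _ hy)
  have hfo : 0 < orderOf g := orderOf_pos g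
  have := hpow (orderOf g - 1) _ h
  rw [← AlgEquiv.mul_apply, ← pow_succ, Nat.sub_add_cancel hfo, pow_orderOf_eq_one] at this
  simpa using this

lemma exists_x [FiniteDimensional K F] {A : ValuationSubring F} {g : F ≃ₐ[K] F}
    (hg : g ∉ Dg A) : ∃ a, A.valuation a < 1 ∧ 1 < A.valuation (g a) := by
  obtain ⟨a, ha, ha'⟩ := exists_a hg
  obtain ⟨b, hb, hb'⟩ := exists_a (fun h => hg (inv_mem_iff.1 h) : g⁻¹ ∉ Dg A)
  refine ⟨a * (g⁻¹ b)⁻¹, ?_, ?_⟩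
  · rw [map_mul, map_inv₀]
    calc _ ≤ 1 * (A.valuation (g⁻¹ b))⁻¹ := by gcongr
      _ < 1 := by rw [one_mul]; exact inv_lt_one_of_one_lt₀ hb'
  · have hb0 : b ≠ 0 := by rintro rfl; simp at hb'
    have hbp : 0 < A.valuation b := (Valuation.pos_iff _).2 hb0
    rw [map_mul, map_inv₀, ← AlgEquiv.mul_apply, mul_inv_cancel, AlgEquiv.one_apply, map_mul,
      map_inv₀, ← div_eq_mul_inv, one_lt_div₀ hbp]
    exact lt_of_le_of_lt hb ha'

lemma one_sub_mul {A : ValuationSubring F} {a b : F} (ha : A.valuation (a - 1) < 1)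
    (hb : A.valuation (b - 1) < 1) : A.valuation (a * b - 1) < 1 := by
  have : a * b - 1 = (a - 1) * (b - 1) + ((a - 1) + (b - 1)) := by ring
  rw [this]
  refine Valuation.map_add_lt _ ?_ (Valuation.map_add_lt _ ha hb)
  rw [map_mul]
  exact mul_lt_one_of_nonneg_of_lt_one_left zero_le ha hb.le

lemma exists_Y [FiniteDimensional K F] (A : ValuationSubring F) :
    ∃ Y : F, A.valuation (Y - 1) < 1 ∧ (∀ d ∈ Dg (K := K) A, d Y = Y) ∧
      ∀ g : F ≃ₐ[K] F, g ∉ Dg A → A.valuation (g Y) < 1 := by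
  classical
  have hfin : Fintype (F ≃ₐ[K] F) := Fintype.ofFinite _
  have hw : ∀ g : F ≃ₐ[K] F, ∃ w : F, (∀ h : F ≃ₐ[K] F, A.valuation (h w) ≤ 1) ∧
      A.valuation (w - 1) < 1 ∧ (g ∉ Dg A → A.valuation (g w) < 1) := by
    intro g
    by_cases hg : g ∈ Dg A
    · exact ⟨1, by simp, by simp, fun h => absurd hg h⟩
    · obtain ⟨a, ha, ha'⟩ := exists_x hg
      obtain ⟨w, hw⟩ := exists_w (K := K) A a
      exact ⟨w, fun h => (hw h).1, by simpa using (hw 1).2.2.2.2 (by simpa using ha),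
        fun _ => (hw g).2.2.2.1 ha'⟩
  choose w hw1 hw2 hw3 using hw
  let e := ∏ g, w g
  have he1 : A.valuation (e - 1) < 1 :=
    Finset.prod_induction _ (fun y => A.valuation (y - 1) < 1) (fun _ _ => one_sub_mul)
      (by simp) (fun g _ => hw2 g)
  have he2 : ∀ g ∉ Dg (K := K) A, A.valuation (g e) < 1 := by
    intro g hg
    simp only [e, map_prod]
    rw [← Finset.mul_prod_erase _ _ (Finset.mem_univ g)]
    exact mul_lt_one_of_nonneg_of_lt_one_left zero_le (hw3 g hg)
      (Finset.prod_le_one' fun i _ => hw1 i g)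
  refine ⟨∏ d : Dg (K := K) A, d.1 e, ?_, ?_, ?_⟩
  · refine Finset.prod_induction _ (fun y => A.valuation (y - 1) < 1) (fun _ _ => one_sub_mul)
      (by simp) (fun d _ => ?_)
    have := (Dg_lt d.2 (e - 1)).1 he1
    simpa using this
  · intro d hd
    rw [map_prod]
    exact Fintype.prod_equiv (Equiv.mulLeft (⟨d, hd⟩ : Dg (K := K) A)) _ _ (fun x => rfl)
  · intro g hg
    rw [map_prod, map_prod, ← Finset.mul_prod_erase _ _ (Finset.mem_univ 1)]
    have h : ∀ d : Dg (K := K) A, A.valuation (g (d.1 e)) < 1 := by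
      intro d
      rw [← AlgEquiv.mul_apply]
      exact he2 _ fun h => hg ((Subgroup.mul_mem_cancel_right _ d.2).1 h)
    exact mul_lt_one_of_nonneg_of_lt_one_left zero_le (h 1)
      (Finset.prod_le_one' fun i _ => (h i).le)

lemma exists_char {G : Type*} [Group G] [Finite G] (hc : ∀ a b : G, a * b = b * a) {ℓ : ℕ}
    (hℓ : ℓ.Prime) (he : ∀ a : G, a ^ ℓ = 1) {ζ : K} (hζ : IsPrimitiveRoot ζ ℓ)
    (H : Subgroup G) {s : G} (hs : s ∉ H) :
    ∃ χ : G →* Kˣ, (∀ h ∈ H, χ h = 1) ∧ χ s ≠ 1 := by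
  let _ : CommGroup G := { (inferInstance : Group G) with mul_comm := hc }
  have : NeZero ℓ := ⟨hℓ.ne_zero⟩
  have h1 : HasEnoughRootsOfUnity K ℓ := ⟨⟨ζ, hζ⟩, inferInstance⟩
  have h2 : Monoid.exponent (G ⧸ H) ∣ ℓ := by
    apply Monoid.exponent_dvd_of_forall_pow_eq_one
    intro g
    induction g using QuotientGroup.induction_on with
    | H g => rw [← QuotientGroup.mk_pow, he]; rfl
  have h3 : HasEnoughRootsOfUnity K (Monoid.exponent (G ⧸ H)) :=
    HasEnoughRootsOfUnity.of_dvd K h2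
  obtain ⟨φ, hφ⟩ := CommGroup.exists_apply_ne_one_of_hasEnoughRootsOfUnity (G ⧸ H) K
    (a := (s : G ⧸ H)) (by rwa [Ne, QuotientGroup.eq_one_iff])
  refine ⟨φ.comp (QuotientGroup.mk' H), fun h hh => ?_, hφ⟩
  have : (QuotientGroup.mk' H) h = 1 := (QuotientGroup.eq_one_iff h).2 hh
  rw [MonoidHom.comp_apply, this, map_one]

/-- Lagrange resolvent over cosets. -/
noncomputable def resolv (H : Subgroup (F ≃ₐ[K] F)) [Fintype ((F ≃ₐ[K] F) ⧸ H)]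
    (χ : (F ≃ₐ[K] F) →* Kˣ) (Y : F) : F :=
  ∑ q : (F ≃ₐ[K] F) ⧸ H, algebraMap K F ((χ q.out)⁻¹ : Kˣ) * q.out Y

lemma resolv_eigen (H : Subgroup (F ≃ₐ[K] F)) [Fintype ((F ≃ₐ[K] F) ⧸ H)]
    (χ : (F ≃ₐ[K] F) →* Kˣ) (hχ : ∀ h ∈ H, χ h = 1) (Y : F) (hY : ∀ h ∈ H, h Y = Y)
    (g : F ≃ₐ[K] F) : g (resolv H χ Y) = algebraMap K F (χ g) * resolv H χ Y := by
  have key : ∀ a b : F ≃ₐ[K] F, a⁻¹ * b ∈ H → χ a = χ b ∧ a Y = b Y := by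
    intro a b hab
    have h1 : b = a * (a⁻¹ * b) := by group
    constructor
    · rw [h1, map_mul, hχ _ hab, mul_one]
    · rw [h1, AlgEquiv.mul_apply, hY _ hab]
  unfold resolv
  rw [map_sum, Finset.mul_sum]
  refine Fintype.sum_equiv (MulAction.toPerm g) _ _ fun q => ?_
  have h2 : (g * q.out)⁻¹ * (g • q).out ∈ H := by
    rw [← QuotientGroup.eq, QuotientGroup.out_eq', ← smul_eq_mul, ← MulAction.Quotient.smul_coe,
      QuotientGroup.out_eq']
  obtain ⟨h3, h4⟩ := key _ _ h2
  simp only [MulAction.toPerm_apply]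
  rw [← h3, ← h4, map_mul, AlgEquiv.commutes, AlgEquiv.mul_apply, ← mul_assoc, ← map_mul,
    ← Units.val_mul, map_mul, mul_inv_rev, mul_comm (χ q.out)⁻¹, mul_inv_cancel_left]

lemma resolv_pow [FiniteDimensional K F] [IsGalois K F] {ℓ : ℕ}
    (he : ∀ a : F ≃ₐ[K] F, a ^ ℓ = 1) (χ : (F ≃ₐ[K] F) →* Kˣ) (α : F)
    (h : ∀ g : F ≃ₐ[K] F, g α = algebraMap K F (χ g) * α) :
    ∃ c : K, α ^ ℓ = algebraMap K F c := by
  have := (IsGalois.mem_range_algebraMap_iff_fixed (F := K) (α ^ ℓ)).2 (by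
    intro g
    rw [map_pow, h, mul_pow, ← map_pow, ← Units.val_pow_eq_pow_val, ← map_pow, he]
    simp)
  obtain ⟨c, hc⟩ := this
  exact ⟨c, hc.symm⟩

lemma val_char {ℓ : ℕ} (hℓ : ℓ ≠ 0) (A : ValuationSubring F) {η : F} (h : η ^ ℓ = 1) :
    A.valuation η = 1 := by
  have := congrArg A.valuation h
  rw [map_pow, map_one] at this
  exact (pow_eq_one_iff_of_nonneg zero_le hℓ).1 this

lemma val_chi {ℓ : ℕ} (hℓ : ℓ ≠ 0) (A : ValuationSubring F) 
    (he : ∀ a : F ≃ₐ[K] F, a ^ ℓ = 1) (χ : (F ≃ₐ[K] F) →* Kˣ) (g : F ≃ₐ[K] F) :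
    A.valuation (algebraMap K F ((χ g)⁻¹ : Kˣ)) = 1 := by
  apply val_char hℓ
  rw [← map_inv, ← map_pow, ← Units.val_pow_eq_pow_val, ← map_pow, he]
  simp

lemma main_D [FiniteDimensional K F] [IsGalois K F] {ℓ : ℕ} (hℓ : ℓ.Prime)
    (hc : ∀ a b : F ≃ₐ[K] F, a * b = b * a)
    (he : ∀ a : F ≃ₐ[K] F, a ^ ℓ = 1) {ζ : K} (hζ : IsPrimitiveRoot ζ ℓ)
    (A : ValuationSubring F) (s : F ≃ₐ[K] F) (hs : s ∉ Dg A) :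
    ∃ (α : F) (a : K), A.valuation (algebraMap K F a) < 1 ∧ α ^ ℓ = algebraMap K F (1 + a) ∧
      s α ≠ α := by
  classical
  have hfin : Fintype ((F ≃ₐ[K] F) ⧸ Dg (K := K) A) := Fintype.ofFinite _
  obtain ⟨Y, hY1, hY2, hY3⟩ := exists_Y (K := K) A
  obtain ⟨χ, hχ, hχs⟩ := exists_char hc hℓ he hζ (Dg A) hs
  let α := resolv (Dg A) χ Y
  have heig := resolv_eigen (Dg A) χ hχ Y hY2
  obtain ⟨c, hc'⟩ := resolv_pow he χ α heig
  have hα : A.valuation (α - 1) < 1 := by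
    have hout : ((1 : (F ≃ₐ[K] F)) : (F ≃ₐ[K] F) ⧸ Dg (K := K) A).out ∈ Dg (K := K) A := by
      have := QuotientGroup.out_eq' ((1 : (F ≃ₐ[K] F)) : (F ≃ₐ[K] F) ⧸ Dg (K := K) A)
      rw [eq_comm, QuotientGroup.eq] at this
      simpa using this
    have : α - 1 = (Y - 1) + ∑ q ∈ Finset.univ.erase
        ((1 : (F ≃ₐ[K] F)) : (F ≃ₐ[K] F) ⧸ Dg (K := K) A),
        algebraMap K F ((χ q.out)⁻¹ : Kˣ) * q.out Y := by
      simp only [α, resolv]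
      rw [← Finset.add_sum_erase _ _ (Finset.mem_univ
        ((1 : (F ≃ₐ[K] F)) : (F ≃ₐ[K] F) ⧸ Dg (K := K) A)), hχ _ hout, hY2 _ hout]
      simp
      ring
    rw [this]
    refine Valuation.map_add_lt _ hY1 (Valuation.map_sum_lt _ one_ne_zero fun q hq => ?_)
    rw [map_mul, val_chi hℓ.ne_zero A he, one_mul]
    apply hY3
    intro h
    apply (Finset.mem_erase.1 hq).1
    rw [← QuotientGroup.out_eq' q, eq_comm, QuotientGroup.eq]
    simpa using h
  refine ⟨α, c - 1, ?_, by rw [hc']; congr 1; ring, ?_⟩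
  · rw [map_sub, ← hc', map_one]
    have : ∀ n : ℕ, A.valuation (α ^ n - 1) < 1 := by
      intro n
      induction n with
      | zero => simp
      | succ n ih => rw [pow_succ]; exact one_sub_mul ih hα
    exact this ℓ
  · intro h
    have hα0 : α ≠ 0 := by
      intro h0; rw [h0] at hα; simp at hα
    rw [heig] at h
    have h5 : algebraMap K F (χ s) = 1 := mul_right_cancel₀ hα0 (by rw [one_mul]; exact h)
    apply hχs
    ext
    exact (algebraMap K F).injective (by simpa using h5)

/-- Inertia group at finite level. -/
def Ig (A : ValuationSubring F) : Subgroup (F ≃ₐ[K] F) where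
  carrier := {g | g ∈ Dg A ∧ ∀ x, A.valuation x ≤ 1 → A.valuation (g x - x) < 1}
  mul_mem' := by
    intro a b ha hb
    refine ⟨mul_mem ha.1 hb.1, fun x hx => ?_⟩
    have h : (a * b) x - x = (a (b x) - b x) + (b x - x) := by
      rw [AlgEquiv.mul_apply]; ring
    rw [h]
    exact Valuation.map_add_lt _ (ha.2 _ ((hb.1 x).1 hx)) (hb.2 x hx)
  one_mem' := ⟨one_mem _, fun x _ => by simp⟩
  inv_mem' := by
    intro a ha
    refine ⟨inv_mem ha.1, fun x hx => ?_⟩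
    rw [Dg_lt ha.1, map_sub, ← AlgEquiv.mul_apply, mul_inv_cancel, AlgEquiv.one_apply,
      Valuation.map_sub_swap]
    exact ha.2 x hx

/-- The intersection of the conjugates of `A`. -/
def Rr (K : Type*) {F : Type*} [Field K] [Field F] [Algebra K F] (A : ValuationSubring F) :
    Subring F where
  carrier := {y | ∀ g : F ≃ₐ[K] F, g y ∈ A}
  mul_mem' := fun {a b} ha hb g => by rw [map_mul]; exact mul_mem (ha g) (hb g)
  one_mem' := fun g => by rw [map_one]; exact one_mem _
  add_mem' := fun {a b} ha hb g => by rw [map_add]; exact add_mem (ha g) (hb g)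
  zero_mem' := fun g => by rw [map_zero]; exact zero_mem _
  neg_mem' := fun {a} ha g => by rw [map_neg]; exact neg_mem (ha g)

/-- The conjugate `y ↦ g y` as a map from `Rr` to `A`. -/
def cj (A : ValuationSubring F) (g : F ≃ₐ[K] F) : Rr K A →+* A where
  toFun y := ⟨g y.1, y.2 g⟩
  map_one' := by ext; simp
  map_mul' _ _ := by ext; simp
  map_zero' := by ext; simp
  map_add' _ _ := by ext; simp

lemma res_eq_iff (A : ValuationSubring F) (a b : A) :
    IsLocalRing.residue A a = IsLocalRing.residue A b ↔ A.valuation ((a : F) - b) < 1 := by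
  rw [← sub_eq_zero, ← map_sub, IsLocalRing.residue_eq_zero_iff, A.valuation_lt_one_iff]
  rfl

lemma cj_inj [FiniteDimensional K F] (hc : ∀ a b : F ≃ₐ[K] F, a * b = b * a)
    (A : ValuationSubring F) (g g' : F ≃ₐ[K] F)
    (h : ∀ y, IsLocalRing.residue A (cj A g y) = IsLocalRing.residue A (cj A g' y)) :
    g⁻¹ * g' ∈ Ig A := by
  have h0 : ∀ y : F, (∀ k : F ≃ₐ[K] F, A.valuation (k y) ≤ 1) →
      A.valuation (g y - g' y) < 1 := by
    intro y hy
    have := h ⟨y, fun k => (A.valuation_le_one_iff _).1 (hy k)⟩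
    rw [res_eq_iff] at this
    exact this
  have h1 : ∀ y : F, (∀ k : F ≃ₐ[K] F, A.valuation (k y) ≤ 1) →
      A.valuation (y - (g' * g⁻¹) y) < 1 := by
    intro y hy
    have := h0 (g⁻¹ y) (fun k => by rw [← AlgEquiv.mul_apply]; exact hy _)
    rw [← AlgEquiv.mul_apply, mul_inv_cancel, AlgEquiv.one_apply] at this
    exact this
  rw [hc]
  generalize g' * g⁻¹ = τ at h1
  have hτ : τ ∈ Dg A := by
    by_contra hτ
    obtain ⟨x, hx, hx'⟩ := exists_x hτ
    obtain ⟨w, hw⟩ := exists_w (K := K) A x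
    have e1 : A.valuation w = 1 := (hw 1).2.2.1 hx.le
    have e2 : A.valuation (τ w) < 1 := (hw τ).2.2.2.1 hx'
    have e3 := h1 w fun k => (hw k).1
    have e4 := Valuation.map_add_lt _ e3 e2
    rw [sub_add_cancel, e1] at e4
    exact lt_irrefl _ e4
  refine ⟨hτ, fun x hx => ?_⟩
  obtain ⟨w, hw⟩ := exists_w (K := K) A x
  have e1 : A.valuation w = 1 := (hw 1).2.2.1 hx
  have e2 := h1 w fun k => (hw k).1
  have e3 := h1 (w * x) fun k => (hw k).2.1
  have e4 : w * (τ x - x) = (w - τ w) * τ x - (w * x - τ (w * x)) := by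
    rw [map_mul]; ring
  have e5 : A.valuation (w * (τ x - x)) < 1 := by
    rw [e4]
    refine Valuation.map_sub_lt _ ?_ e3
    rw [map_mul]
    exact mul_lt_one_of_nonneg_of_lt_one_left zero_le e2 ((hτ x).1 hx)
  rwa [map_mul, e1, one_mul] at e5

lemma main_I [FiniteDimensional K F] [IsGalois K F] {ℓ : ℕ} (hℓ : ℓ.Prime)
    (hc : ∀ a b : F ≃ₐ[K] F, a * b = b * a)
    (he : ∀ a : F ≃ₐ[K] F, a ^ ℓ = 1) {ζ : K} (hζ : IsPrimitiveRoot ζ ℓ)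
    (A : ValuationSubring F) (s : F ≃ₐ[K] F) (hs : s ∉ Ig A) :
    ∃ (α : F) (c : K), A.valuation (algebraMap K F c) = 1 ∧ α ^ ℓ = algebraMap K F c ∧
      s α ≠ α := by
  classical
  have hfin : Fintype ((F ≃ₐ[K] F) ⧸ Ig (K := K) A) := Fintype.ofFinite _
  have hfin' : Fintype (Ig (K := K) A) := Fintype.ofFinite _
  have hFact : Fact ℓ.Prime := ⟨hℓ⟩
  let k := IsLocalRing.ResidueField A
  obtain ⟨χ, hχ, hχs⟩ := exists_char hc hℓ he hζ (Ig A) hs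
  have hval := val_chi hℓ.ne_zero A he χ
  obtain ⟨n, hn⟩ : ∃ n, Fintype.card (Ig (K := K) A) = ℓ ^ n := by
    rw [← Nat.card_eq_fintype_card]
    refine IsPGroup.iff_card.1 fun g => ⟨1, ?_⟩
    ext1
    simpa using he g.1
  -- the averaging operator
  obtain ⟨T, ψ, c, hψ, hc0, hT1, hT2⟩ : ∃ (T : Rr K A → Rr K A) (ψ : k →* k) (c : k),
      Function.Injective ψ ∧ c ≠ 0 ∧ (∀ y, ∀ i ∈ Ig (K := K) A, i (T y).1 = (T y).1) ∧
      ∀ (g : F ≃ₐ[K] F) (y), IsLocalRing.residue A (cj A g (T y)) =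
        c * ψ (IsLocalRing.residue A (cj A g y)) := by
    have hmem : ∀ (y : Rr K A) (i : F ≃ₐ[K] F), i y.1 ∈ Rr K A := by
      intro y i g
      rw [← AlgEquiv.mul_apply]; exact y.2 _
    have hres : ∀ (y : Rr K A) (g : F ≃ₐ[K] F) (i : Ig (K := K) A),
        IsLocalRing.residue A (cj A g ⟨i.1 y.1, hmem y i.1⟩) =
          IsLocalRing.residue A (cj A g y) := by
      intro y g i
      rw [res_eq_iff]
      change A.valuation (g (i.1 y.1) - g y.1) < 1
      rw [← AlgEquiv.mul_apply, hc, AlgEquiv.mul_apply]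
      exact i.2.2 _ ((A.valuation_le_one_iff _).2 (y.2 g))
    by_cases hp : (ℓ : k) = 0
    · have hch : CharP k ℓ := by
        have := CharP.ringChar_of_prime_eq_zero hℓ hp
        rw [← this]; infer_instance
      have hex : ExpChar k ℓ := ExpChar.prime hℓ
      refine ⟨fun y => ∏ i : Ig (K := K) A, ⟨i.1 y.1, hmem y i.1⟩,
        (iterateFrobenius k ℓ n : k →+* k), 1, iterateFrobenius_inj k ℓ n, one_ne_zero, ?_, ?_⟩
      · intro y i hi
        rw [SubmonoidClass.coe_finsetProd, map_prod]
        exact Fintype.prod_equiv (Equiv.mulLeft (⟨i, hi⟩ : Ig (K := K) A)) _ _ (fun x => rfl)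
      · intro g y
        rw [map_prod, map_prod]
        simp only [hres]
        rw [Finset.prod_const, Finset.card_univ, hn, one_mul]
        rfl
    · refine ⟨fun y => ∑ i : Ig (K := K) A, ⟨i.1 y.1, hmem y i.1⟩,
        MonoidHom.id k, (ℓ : k) ^ n, Function.injective_id, pow_ne_zero _ hp, ?_, ?_⟩
      · intro y i hi
        rw [AddSubmonoidClass.coe_finsetSum, map_sum]
        exact Fintype.sum_equiv (Equiv.mulLeft (⟨i, hi⟩ : Ig (K := K) A)) _ _ (fun x => rfl)
      · intro g y
        rw [map_sum, map_sum]
        simp only [hres]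
        rw [Finset.sum_const, Finset.card_univ, hn, nsmul_eq_mul]
        simp
  let f : ((F ≃ₐ[K] F) ⧸ Ig (K := K) A) → (Rr K A →* k) := fun q =>
    ψ.comp (((IsLocalRing.residue A).comp (cj A q.out) : Rr K A →+* k) : Rr K A →* k)
  have hf : Function.Injective f := by
    intro q q' hqq
    rw [← QuotientGroup.out_eq' q, ← QuotientGroup.out_eq' q', QuotientGroup.eq]
    apply cj_inj hc
    intro y
    exact hψ (DFunLike.congr_fun hqq y)
  have hli := (linearIndependent_monoidHom (Rr K A) k).comp f hf
  let u : ((F ≃ₐ[K] F) ⧸ Ig (K := K) A) → A := fun q =>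
    ⟨algebraMap K F ((χ q.out)⁻¹ : Kˣ), (A.valuation_le_one_iff _).1 (hval _).le⟩
  have hu : ∀ q, IsLocalRing.residue A (u q) ≠ 0 := by
    intro q
    rw [Ne, IsLocalRing.residue_eq_zero_iff, A.valuation_lt_one_iff]
    exact (hval _).not_lt
  obtain ⟨y, hy⟩ : ∃ y : Rr K A, ∑ q, IsLocalRing.residue A (u q) * f q y ≠ 0 := by
    by_contra! hcon
    rw [Fintype.linearIndependent_iff] at hli
    refine hu (1 : F ≃ₐ[K] F) (hli (fun q => IsLocalRing.residue A (u q)) ?_ _)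
    funext y
    simpa using hcon y
  let α := resolv (Ig A) χ (T y).1
  have heig := resolv_eigen (Ig A) χ hχ (T y).1 (hT1 y)
  obtain ⟨d, hd⟩ := resolv_pow he χ α heig
  have hα : A.valuation α = 1 := by
    let a : A := ∑ q, u q * cj A q.out (T y)
    have haα : (a : F) = α := by
      simp only [a, α, resolv]
      rw [AddSubmonoidClass.coe_finsetSum]
      rfl
    have ha : IsLocalRing.residue A a ≠ 0 := by
      have : IsLocalRing.residue A a = c * ∑ q, IsLocalRing.residue A (u q) * f q y := by
        simp only [a]
        rw [map_sum, Finset.mul_sum]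
        refine Finset.sum_congr rfl fun q _ => ?_
        rw [map_mul, hT2]
        change _ * (c * f q y) = _
        ring
      rw [this]
      exact mul_ne_zero hc0 hy
    rw [Ne, IsLocalRing.residue_eq_zero_iff, A.valuation_lt_one_iff, haα] at ha
    refine le_antisymm ?_ (not_lt.1 ha)
    rw [← haα]; exact A.valuation_le_one a
  refine ⟨α, d, ?_, hd, ?_⟩
  · rw [← hd, map_pow, hα, one_pow]
  · intro h
    have hα0 : α ≠ 0 := by
      intro h0; rw [h0] at hα; simp at hα
    rw [heig] at h
    have h5 : algebraMap K F (χ s) = 1 := mul_right_cancel₀ hα0 (by rw [one_mul]; exact h)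
    apply hχs
    ext
    exact (algebraMap K F).injective (by simpa using h5)

end fin
section top
variable {K : Type*} [Field K] {Ω : Type*} [Field Ω] [Algebra K Ω] {ℓ : ℕ}

lemma kummer {L : Type*} [Field L] [Algebra K L] (hℓ : ℓ.Prime) {ζ : K}
    (hζ : IsPrimitiveRoot ζ ℓ) (σ : L ≃ₐ[K] L) (α : L) (x : K) (hx : x ≠ 0)
    (h : α ^ ℓ = algebraMap K L x) :
    ∃ i : ℕ, σ α = algebraMap K L (ζ ^ i) * α := by
  have : NeZero ℓ := ⟨hℓ.ne_zero⟩
  have hx' : algebraMap K L x ≠ 0 := by simpa using hx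
  have hα : α ≠ 0 := by
    rintro rfl
    rw [zero_pow hℓ.ne_zero] at h
    exact hx' h.symm
  have h1 : (σ α / α) ^ ℓ = 1 := by
    rw [div_pow, ← map_pow, h, AlgEquiv.commutes, div_self hx']
  obtain ⟨i, -, hi⟩ := (hζ.map_of_injective (algebraMap K L).injective).eq_pow_of_pow_eq_one h1
  refine ⟨i, ?_⟩
  rw [map_pow, hi, div_mul_cancel₀ _ hα]

lemma ext_gen (σ τ : Kprime K Ω ℓ ≃ₐ[K] Kprime K Ω ℓ)
    (h : ∀ (α : Kprime K Ω ℓ) (x : K), x ≠ 0 → α ^ ℓ = algebraMap K _ x → σ α = τ α) :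
    σ = τ := by
  have : (σ : Kprime K Ω ℓ →ₐ[K] Kprime K Ω ℓ) = τ := by
    refine IntermediateField.algHom_ext_of_eq_adjoin K (S := Kprime K Ω ℓ) rfl fun α hα => ?_
    obtain ⟨x, hx, hαx⟩ := hα
    exact h _ x hx (Subtype.ext hαx)
  ext1 a
  exact DFunLike.congr_fun this a

lemma kp_comm (hℓ : ℓ.Prime) {ζ : K} (hζ : IsPrimitiveRoot ζ ℓ)
    (σ τ : Kprime K Ω ℓ ≃ₐ[K] Kprime K Ω ℓ) : σ * τ = τ * σ := by
  apply ext_gen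
  intro α x hx h
  obtain ⟨i, hi⟩ := kummer hℓ hζ σ α x hx h
  obtain ⟨j, hj⟩ := kummer hℓ hζ τ α x hx h
  rw [AlgEquiv.mul_apply, AlgEquiv.mul_apply, hi, hj, map_mul, map_mul, AlgEquiv.commutes,
    AlgEquiv.commutes, hi, hj]
  ring

lemma kp_exp (hℓ : ℓ.Prime) {ζ : K} (hζ : IsPrimitiveRoot ζ ℓ)
    (σ : Kprime K Ω ℓ ≃ₐ[K] Kprime K Ω ℓ) : σ ^ ℓ = 1 := by
  apply ext_gen
  intro α x hx h
  obtain ⟨i, hi⟩ := kummer hℓ hζ σ α x hx h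
  have : ∀ n : ℕ, (σ ^ n) α = algebraMap K _ (ζ ^ i) ^ n * α := by
    intro n
    induction n with
    | zero => simp
    | succ n ih =>
      rw [pow_succ', AlgEquiv.mul_apply, ih, map_mul, map_pow, AlgEquiv.commutes, hi, pow_succ]
      ring
  rw [this, ← map_pow, ← pow_mul, mul_comm i, pow_mul, hζ.pow_eq_one]
  simp

lemma kp_galois [IsSepClosure K Ω] : IsGalois K (Kprime K Ω ℓ) := by
  have hG : IsGalois K Ω := inferInstance
  have h1 : Normal K (Kprime K Ω ℓ) := by
    rw [IntermediateField.normal_iff_forall_map_le']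
    intro σ
    unfold Kprime
    rw [IntermediateField.adjoin_map]
    apply IntermediateField.adjoin.mono
    rintro _ ⟨α, ⟨x, hx, h⟩, rfl⟩
    refine ⟨x, hx, ?_⟩
    change (σ α) ^ ℓ = _
    rw [← map_pow, h, AlgEquiv.commutes]
  exact ⟨⟩

lemma fin_level [IsSepClosure K Ω] (hℓ : ℓ.Prime) {ζ : K} (hζ : IsPrimitiveRoot ζ ℓ)
    (x : Kprime K Ω ℓ) : ∃ F : IntermediateField K (Kprime K Ω ℓ), x ∈ F ∧
      FiniteDimensional K F ∧ IsGalois K F ∧ (∀ a b : F ≃ₐ[K] F, a * b = b * a) ∧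
      (∀ a : F ≃ₐ[K] F, a ^ ℓ = 1) := by
  have hG : IsGalois K (Kprime K Ω ℓ) := kp_galois
  have hfd : FiniteDimensional K (IntermediateField.adjoin K {x}) :=
    IntermediateField.adjoin.finiteDimensional (Algebra.IsIntegral.isIntegral x)
  let F := IntermediateField.normalClosure K (IntermediateField.adjoin K {x}) (Kprime K Ω ℓ)
  have hFG : IsGalois K F := inferInstance
  have hsurj := AlgEquiv.restrictNormalHom_surjective (F := K) (K₁ := F) (Kprime K Ω ℓ)
  refine ⟨F, ?_, inferInstance, hFG, ?_, ?_⟩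
  · exact IntermediateField.le_normalClosure _ (IntermediateField.mem_adjoin_simple_self K x)
  · intro a b
    obtain ⟨a, rfl⟩ := hsurj a
    obtain ⟨b, rfl⟩ := hsurj b
    rw [← map_mul, kp_comm hℓ hζ, map_mul]
  · intro a
    obtain ⟨a, rfl⟩ := hsurj a
    rw [← map_pow, kp_exp hℓ hζ, map_one]

lemma comap_lt {L : Type*} [Field L] {E : Type*} [Field E] (f : L →+* E)
    (B : ValuationSubring E) (a : L) :
    (B.comap f).valuation a < 1 ↔ B.valuation (f a) < 1 := by
  rw [lt_one_iff, lt_one_iff, ValuationSubring.mem_comap, map_inv₀, map_eq_zero]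

lemma comap_le {L : Type*} [Field L] {E : Type*} [Field E] (f : L →+* E)
    (B : ValuationSubring E) (a : L) :
    (B.comap f).valuation a ≤ 1 ↔ B.valuation (f a) ≤ 1 := by
  rw [ValuationSubring.valuation_le_one_iff, ValuationSubring.valuation_le_one_iff,
    ValuationSubring.mem_comap]

lemma comap_eq {L : Type*} [Field L] {E : Type*} [Field E] (f : L →+* E)
    (B : ValuationSubring E) (a : L) :
    (B.comap f).valuation a = 1 ↔ B.valuation (f a) = 1 := by
  have h1 := comap_lt f B a
  have h2 := comap_le f B a
  have h3 : 1 ≤ (B.comap f).valuation a ↔ 1 ≤ B.valuation (f a) := by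
    rw [← not_lt, h1, not_lt]
  rw [le_antisymm_iff, le_antisymm_iff, h2, h3]

lemma D_sub [IsSepClosure K Ω] (hℓ : ℓ.Prime) {ζ : K} (hζ : IsPrimitiveRoot ζ ℓ)
    (O' : ValuationSubring (Kprime K Ω ℓ)) :
    D1gp K Ω ℓ (O'.comap (algebraMap K (Kprime K Ω ℓ))) ⊆ Dgp K Ω ℓ O' := by
  intro σ hσ x
  obtain ⟨F, hxF, hfd, hG, hc, he⟩ := fin_level hℓ hζ x
  let A := O'.comap (algebraMap F (Kprime K Ω ℓ))
  let s := σ.restrictNormal F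
  have hs : ∀ y : F, algebraMap F (Kprime K Ω ℓ) (s y) = σ (algebraMap F _ y) :=
    fun y => AlgEquiv.restrictNormal_commutes σ F y
  have hsD : s ∈ Dg A := by
    by_contra hsD
    obtain ⟨α, a, h1, h2, h3⟩ := main_D hℓ hc he hζ A s hsD
    apply h3
    apply (algebraMap F (Kprime K Ω ℓ)).injective
    rw [hs]
    apply hσ
    refine ⟨a, ?_, ?_⟩
    · rw [comap_lt] at h1 ⊢
      exact h1
    · rw [← map_pow, h2]; rfl
  have := hsD ⟨x, hxF⟩
  rw [comap_le, comap_le, hs, O'.valuation_le_one_iff, O'.valuation_le_one_iff] at this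
  exact this

lemma I_sub [IsSepClosure K Ω] (hℓ : ℓ.Prime) {ζ : K} (hζ : IsPrimitiveRoot ζ ℓ)
    (O' : ValuationSubring (Kprime K Ω ℓ)) :
    I1gp K Ω ℓ (O'.comap (algebraMap K (Kprime K Ω ℓ))) ⊆ Igp K Ω ℓ O' := by
  intro σ hσ
  have key : ∀ x : Kprime K Ω ℓ, (x ∈ O' ↔ σ x ∈ O') ∧
      (x ∈ O' → O'.valuation (σ x - x) < 1) := by
    intro x
    obtain ⟨F, hxF, hfd, hG, hc, he⟩ := fin_level hℓ hζ x
    let A := O'.comap (algebraMap F (Kprime K Ω ℓ))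
    let s := σ.restrictNormal F
    have hs : ∀ y : F, algebraMap F (Kprime K Ω ℓ) (s y) = σ (algebraMap F _ y) :=
      fun y => AlgEquiv.restrictNormal_commutes σ F y
    have hsI : s ∈ Ig A := by
      by_contra hsI
      obtain ⟨α, a, h1, h2, h3⟩ := main_I hℓ hc he hζ A s hsI
      apply h3
      apply (algebraMap F (Kprime K Ω ℓ)).injective
      rw [hs]
      apply hσ
      have ha : a ≠ 0 := by
        rintro rfl
        simp at h1
      refine ⟨Units.mk0 a ha, ?_, ?_⟩
      · rw [ValuationSubring.mem_unitGroup_iff, Units.val_mk0]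
        rw [comap_eq] at h1 ⊢
        exact h1
      · rw [← map_pow, h2]; rfl
    have h1 := hsI.1 ⟨x, hxF⟩
    have h2 := hsI.2 ⟨x, hxF⟩
    rw [comap_le, comap_le, hs, O'.valuation_le_one_iff, O'.valuation_le_one_iff] at h1
    rw [comap_le, comap_lt, map_sub, hs, O'.valuation_le_one_iff] at h2
    exact ⟨h1, h2⟩
  exact ⟨fun x => (key x).1, fun x => (key x).2⟩

/-- An `ℓ`-th root of unity congruent to `1` is `1` if the residue characteristic is not `ℓ`. -/
lemma root_one {L : Type*} [Field L] (hℓ : ℓ.Prime) (B : ValuationSubring L)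
    (hB : B.valuation (ℓ : L) = 1) (η : L) (hη : η ^ ℓ = 1) (h : B.valuation (η - 1) < 1) :
    η = 1 := by
  by_contra hne
  have h1 := geom_sum_mul η ℓ
  rw [hη, sub_self, mul_eq_zero] at h1
  have h2 := h1.resolve_right (sub_ne_zero.2 hne)
  have h3 : ∀ n : ℕ, B.valuation (η ^ n - 1) < 1 := by
    intro n
    induction n with
    | zero => simp
    | succ n ih => rw [pow_succ]; exact one_sub_mul ih h
  have h4 : B.valuation (∑ j ∈ Finset.range ℓ, (η ^ j - 1)) < 1 :=
    Valuation.map_sum_lt _ one_ne_zero fun j _ => h3 j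
  rw [Finset.sum_sub_distrib, h2] at h4
  simp [hB] at h4

lemma exists_near {L : Type*} [Field L] (hℓ : ℓ.Prime) (B : ValuationSubring L)
    {ζ : L} (hζ : IsPrimitiveRoot ζ ℓ) (α : L) (h : B.valuation (α ^ ℓ - 1) < 1) :
    ∃ ξ : L, ξ ^ ℓ = 1 ∧ B.valuation (α - ξ) < 1 := by
  have h1 := congrArg (Polynomial.eval α) (Polynomial.X_pow_sub_one_eq_prod hℓ.pos hζ)
  simp only [Polynomial.eval_sub, Polynomial.eval_pow, Polynomial.eval_X, Polynomial.eval_one,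
    Polynomial.eval_prod, Polynomial.eval_C] at h1
  by_contra! hcon
  rw [h1, map_prod] at h
  refine absurd h (not_lt.2 ?_)
  refine Finset.one_le_prod' fun i hi => hcon i ?_
  exact (Polynomial.mem_nthRootsFinset hℓ.pos _).1 hi

lemma fix_of (hℓ : ℓ.Prime) {ζ : K} (hζ : IsPrimitiveRoot ζ ℓ)
    (O' : ValuationSubring (Kprime K Ω ℓ)) (hB : O'.valuation (ℓ : Kprime K Ω ℓ) = 1)
    (σ : Kprime K Ω ℓ ≃ₐ[K] Kprime K Ω ℓ) (α : Kprime K Ω ℓ) (x : K)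
    (h : α ^ ℓ = algebraMap K _ x) (hα : O'.valuation α = 1)
    (hσ : O'.valuation (σ α - α) < 1) : σ α = α := by
  have hα0 : α ≠ 0 := by rintro rfl; simp at hα
  have hx : x ≠ 0 := by
    rintro rfl
    rw [map_zero] at h
    exact hα0 (pow_eq_zero_iff hℓ.ne_zero |>.1 h)
  obtain ⟨i, hi⟩ := kummer hℓ hζ σ α x hx h
  have h1 : algebraMap K (Kprime K Ω ℓ) (ζ ^ i) = 1 := by
    apply root_one hℓ O' hB
    · rw [← map_pow, ← pow_mul, mul_comm, pow_mul, hζ.pow_eq_one]; simp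
    · have : σ α - α = (algebraMap K (Kprime K Ω ℓ) (ζ ^ i) - 1) * α := by rw [hi]; ring
      rwa [this, map_mul, hα, mul_one] at hσ
  rw [hi, h1, one_mul]

lemma val_ell (hℓ : ℓ.Prime) (O' : ValuationSubring (Kprime K Ω ℓ))
    (hr : ringChar (IsLocalRing.ResidueField
      (O'.comap (algebraMap K (Kprime K Ω ℓ)))) ≠ ℓ) :
    O'.valuation (ℓ : Kprime K Ω ℓ) = 1 := by
  rw [← map_natCast (algebraMap K (Kprime K Ω ℓ)), ← comap_eq]
  have h1 : IsLocalRing.residue (O'.comap (algebraMap K (Kprime K Ω ℓ))) (ℓ : _) ≠ 0 := by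
    intro h
    rw [map_natCast] at h
    exact hr (CharP.ringChar_of_prime_eq_zero hℓ h)
  rw [Ne, IsLocalRing.residue_eq_zero_iff, ValuationSubring.valuation_lt_one_iff] at h1
  have h2 := ValuationSubring.valuation_le_one _
    (ℓ : (O'.comap (algebraMap K (Kprime K Ω ℓ))))
  exact le_antisymm h2 (not_lt.1 h1)

lemma D_sup (hℓ : ℓ.Prime) {ζ : K} (hζ : IsPrimitiveRoot ζ ℓ)
    (O' : ValuationSubring (Kprime K Ω ℓ)) (hB : O'.valuation (ℓ : Kprime K Ω ℓ) = 1) :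
    Dgp K Ω ℓ O' ⊆ D1gp K Ω ℓ (O'.comap (algebraMap K (Kprime K Ω ℓ))) := by
  rintro σ hσ α ⟨a, ha, hα⟩
  have : NeZero ℓ := ⟨hℓ.ne_zero⟩
  have hσ' : σ ∈ Dg O' := fun x => by
    rw [O'.valuation_le_one_iff, O'.valuation_le_one_iff]; exact hσ x
  rw [comap_lt] at ha
  have hζ' := hζ.map_of_injective (algebraMap K (Kprime K Ω ℓ)).injective
  obtain ⟨ξ, hξ, hnear⟩ := exists_near hℓ O' hζ' α (by rw [hα, map_add, map_one]; simpa using ha)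
  obtain ⟨i, -, hi⟩ := hζ'.eq_pow_of_pow_eq_one hξ
  have hσξ : σ ξ = ξ := by rw [← hi, map_pow, AlgEquiv.commutes]
  have hvξ : O'.valuation ξ = 1 := val_char hℓ.ne_zero O' hξ
  have h2 : O'.valuation (σ α - ξ) < 1 := by
    have := (Dg_lt hσ' _).1 hnear
    rwa [map_sub, hσξ] at this
  refine fix_of hℓ hζ O' hB σ α (1 + a) hα ?_ ?_
  · have h3 : α = ξ + (α - ξ) := by ring
    rw [h3, Valuation.map_add_eq_of_lt_left _ (by rw [hvξ]; exact hnear), hvξ]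
  · have : σ α - α = (σ α - ξ) - (α - ξ) := by ring
    rw [this]
    exact Valuation.map_sub_lt _ h2 hnear

lemma I_sup (hℓ : ℓ.Prime) {ζ : K} (hζ : IsPrimitiveRoot ζ ℓ)
    (O' : ValuationSubring (Kprime K Ω ℓ)) (hB : O'.valuation (ℓ : Kprime K Ω ℓ) = 1) :
    Igp K Ω ℓ O' ⊆ I1gp K Ω ℓ (O'.comap (algebraMap K (Kprime K Ω ℓ))) := by
  rintro σ ⟨-, hσ⟩ α ⟨u, hu, hα⟩
  rw [ValuationSubring.mem_unitGroup_iff, comap_eq, ← hα, map_pow] at hu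
  have h1 := (pow_eq_one_iff_of_nonneg zero_le hℓ.ne_zero).1 hu
  exact fix_of hℓ hζ O' hB σ α u hα h1 (hσ α ((O'.valuation_le_one_iff _).1 h1.le))

end top
end Stmt12Aux

/-- for a valued field `(K, v)` with `char K ≠ ℓ` and `μ_ℓ ⊆ K`, and a
prolongation `O'` of `O_v` to `K' = K(√[ℓ]{K^×})`, one has `D_v^1 ⊆ D` and `I_v^1 ⊆ I`;
if moreover `char k(v) ≠ ℓ`, then `D_v^1 = D` and `I_v^1 = I`. -/
theorem stmt_12 (K : Type*) [Field K] (Ω : Type*) [Field Ω] [Algebra K Ω]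
    [IsSepClosure K Ω] (ℓ : ℕ) (hℓ : ℓ.Prime) (hchar : ringChar K ≠ ℓ)
    (hζ : ∃ ζ : K, IsPrimitiveRoot ζ ℓ)
    (O : ValuationSubring K) (O' : ValuationSubring ↥(Kprime K Ω ℓ))
    (hO' : O'.comap (algebraMap K ↥(Kprime K Ω ℓ)) = O) :
    D1gp K Ω ℓ O ⊆ Dgp K Ω ℓ O' ∧ I1gp K Ω ℓ O ⊆ Igp K Ω ℓ O' ∧
      (ringChar (IsLocalRing.ResidueField O) ≠ ℓ →
        D1gp K Ω ℓ O = Dgp K Ω ℓ O' ∧ I1gp K Ω ℓ O = Igp K Ω ℓ O') := by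
  obtain ⟨ζ, hζ⟩ := hζ
  subst hO'
  refine ⟨Stmt12Aux.D_sub hℓ hζ O', Stmt12Aux.I_sub hℓ hζ O', fun hr => ?_⟩
  have hB := Stmt12Aux.val_ell hℓ O' hr
  exact ⟨(Stmt12Aux.D_sub hℓ hζ O').antisymm (Stmt12Aux.D_sup hℓ hζ O' hB),
    (Stmt12Aux.I_sub hℓ hζ O').antisymm (Stmt12Aux.I_sup hℓ hζ O' hB)⟩
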